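/- Let X be a reflexive real Banach space. Then X has the Mazur Intersection Property (every norm-closed, bounded, convex set in X is the intersection of all closed balls containing it) if and only if every nonempty norm-closed, bounded, convex set in X is the norm-closed convex hull of its set of farthest points. -/

import Mathlib

open Metric Set Pointwise

/-- The farthest distance map `r_K(x) = sup {‖z - x‖ : z ∈ K}`. -/
noncomputable def rFar {X : Type*} [NormedAddCommGroup X] (K : Set X) (x : X) : ℝ :=
  sSup ((fun z => ‖z - x‖) '' K)

/-- `Q_K(x)`: the set of points of `K` farthest from `x`. -/
def QFar {X : Type*} [NormedAddCommGroup X] (K : Set X) (x : X) : Set X :=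
  {z ∈ K | ‖z - x‖ = rFar K x}

/-- `D(K)`: the set of points admitting a farthest point in `K`. -/
def DFar {X : Type*} [NormedAddCommGroup X] (K : Set X) : Set X :=
  {x | (QFar K x).Nonempty}

/-- `b(K)`: the set of farthest points of `K`. -/
def farPoints {X : Type*} [NormedAddCommGroup X] (K : Set X) : Set X :=
  ⋃ x ∈ DFar K, QFar K x

/-- The crescent `C(K, x, α) = {z ∈ K : ‖z - x‖ > r_K(x) - α}`. -/
def crescent {X : Type*} [NormedAddCommGroup X] (K : Set X) (x : X) (α : ℝ) : Set X :=
  {z ∈ K | rFar K x - α < ‖z - x‖}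

/-- Property (R): every crescent of `K` contains a farthest point of `K`. -/
def PropR {X : Type*} [NormedAddCommGroup X] (K : Set X) : Prop :=
  ∀ (x : X) (α : ℝ), 0 < α → ∃ z ∈ crescent K x α, z ∈ farPoints K

/-- A set is admissible if it is the intersection of all closed balls containing it. -/
def Admissible {X : Type*} [NormedAddCommGroup X] (K : Set X) : Prop :=
  K = ⋂ p ∈ {p : X × ℝ | K ⊆ closedBall p.1 p.2}, closedBall p.1 p.2

section FarAux

variable {X : Type*} [NormedAddCommGroup X]

lemma rFar_bdd {K : Set X} (hb : Bornology.IsBounded K) (x : X) :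
    BddAbove ((fun z => ‖z - x‖) '' K) := by
  obtain ⟨C, hC⟩ := hb.exists_norm_le
  refine ⟨C + ‖x‖, ?_⟩
  rintro _ ⟨z, hz, rfl⟩
  have h1 := norm_sub_le z x
  have h2 := hC z hz
  simp only
  linarith

lemma le_rFar {K : Set X} (hb : Bornology.IsBounded K) (x : X) {z : X} (hz : z ∈ K) :
    ‖z - x‖ ≤ rFar K x :=
  le_csSup (rFar_bdd hb x) ⟨z, hz, rfl⟩

lemma rFar_le {K : Set X} (hne : K.Nonempty) (x : X) {c : ℝ} (h : ∀ z ∈ K, ‖z - x‖ ≤ c) :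
    rFar K x ≤ c := by
  refine csSup_le (hne.image _) ?_
  rintro _ ⟨z, hz, rfl⟩
  exact h z hz

lemma exists_lt_rFar {K : Set X} (hne : K.Nonempty) (x : X) {ε : ℝ} (hε : 0 < ε) :
    ∃ z ∈ K, rFar K x - ε < ‖z - x‖ := by
  by_contra! h
  have := rFar_le hne x h
  linarith

lemma rFar_lip {K : Set X} (hne : K.Nonempty) (hb : Bornology.IsBounded K) (x y : X) :
    rFar K y ≤ rFar K x + ‖y - x‖ := by
  refine rFar_le hne y fun z hz => ?_
  have h1 := le_rFar hb x hz
  have h2 := norm_sub_le (z - x) (y - x)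
  rw [sub_sub_sub_cancel_right] at h2
  linarith

lemma rFar_nonneg {K : Set X} (hne : K.Nonempty) (hb : Bornology.IsBounded K) (x : X) :
    0 ≤ rFar K x := by
  obtain ⟨z, hz⟩ := hne
  exact (norm_nonneg _).trans (le_rFar hb x hz)

lemma rFar_cont {K : Set X} (hne : K.Nonempty) (hb : Bornology.IsBounded K) :
    Continuous (rFar K) := by
  have : LipschitzWith 1 (rFar K) := by
    refine LipschitzWith.of_le_add_mul 1 fun x y => ?_
    have := rFar_lip hne hb y x
    rw [dist_eq_norm]
    simpa using this
  exact this.continuous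

lemma mem_farPoints {K : Set X} {z : X} : z ∈ farPoints K ↔ ∃ x, z ∈ K ∧ ‖z - x‖ = rFar K x := by
  simp only [farPoints, DFar, QFar, mem_iUnion, mem_ofPred_eq, exists_prop]
  constructor
  · rintro ⟨x, -, h⟩
    exact ⟨x, h⟩
  · rintro ⟨x, h⟩
    exact ⟨x, ⟨z, h⟩, h⟩

variable [NormedSpace ℝ X]

lemma rFar_convex {K : Set X} (hne : K.Nonempty) (hb : Bornology.IsBounded K) :
    ConvexOn ℝ univ (rFar K) := by
  refine ⟨convex_univ, fun x _ y _ a b ha hb' hab => ?_⟩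
  refine rFar_le hne _ fun z hz => ?_
  have h1 : z - (a • x + b • y) = a • (z - x) + b • (z - y) := by
    have : z = a • z + b • z := by rw [← add_smul, hab, one_smul]
    nth_rewrite 1 [this]
    module
  rw [h1]
  refine (norm_add_le _ _).trans ?_
  rw [norm_smul, norm_smul, Real.norm_of_nonneg ha, Real.norm_of_nonneg hb', smul_eq_mul,
    smul_eq_mul]
  have := le_rFar hb x hz
  have := le_rFar hb y hz
  gcongr

/-- `g` is a subgradient of `f` at `x`. -/
def IsSubgrad (f : X → ℝ) (x : X) (g : StrongDual ℝ X) : Prop :=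
  ∀ y, f x + g (y - x) ≤ f y

lemma exists_subgrad {f : X → ℝ} (hf : ConvexOn ℝ univ f) (hc : Continuous f) (x : X) :
    ∃ g, IsSubgrad f x g := by
  have ho : IsOpen {p : X × ℝ | f p.1 < p.2} :=
    isOpen_lt (hc.comp continuous_fst) continuous_snd
  have hcv : Convex ℝ {p : X × ℝ | f p.1 < p.2} := by
    have := hf.convex_strict_epigraph
    simpa using this
  obtain ⟨F, hF⟩ := geometric_hahn_banach_open_point (x := (x, f x)) hcv ho (by simp)
  have hsplit : ∀ (y : X) (t : ℝ), F (y, t) = F (y, 0) + t * F (0, 1) := by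
    intro y t
    have : (y, t) = (y, (0:ℝ)) + t • ((0:X), (1:ℝ)) := by simp
    rw [this, map_add, map_smul, smul_eq_mul]
  set c := F (0, 1) with hcdef
  have hneg : c < 0 := by
    have := hF (x, f x + 1) (by simp)
    rw [hsplit x (f x + 1), hsplit x (f x)] at this
    linarith
  refine ⟨(-c)⁻¹ • F.comp (ContinuousLinearMap.inl ℝ X ℝ), fun y => ?_⟩
  have key : F (y, 0) + f y * c ≤ F (x, 0) + f x * c := by
    refine le_of_forall_pos_le_add fun ε hε => ?_
    have hd : 0 < ε / (-c) := div_pos hε (by linarith)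
    have := hF (y, f y + ε / (-c)) (by simpa using hd)
    rw [hsplit y, hsplit x] at this
    have h2 : ε / (-c) * c = -ε := by
      have hc0 : c ≠ 0 := hneg.ne
      rw [div_neg, neg_mul, div_mul_cancel₀ _ hc0]
    nlinarith
  have hsub : F (y - x, 0) = F (y, 0) - F (x, 0) := by
    rw [← map_sub]; simp
  have : ((-c)⁻¹ • F.comp (ContinuousLinearMap.inl ℝ X ℝ)) (y - x)
      = (-c)⁻¹ * (F (y, 0) - F (x, 0)) := by
    simp [← hsub]
  rw [this]
  have h3 : (-c)⁻¹ * (F (y, 0) - F (x, 0)) ≤ (-c)⁻¹ * ((-c) * (f y - f x)) := by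
    apply mul_le_mul_of_nonneg_left
    · linarith
    · exact inv_nonneg.2 (by linarith)
  rw [inv_mul_cancel_left₀ (by linarith)] at h3
  linarith

lemma subgrad_le {K : Set X} (hne : K.Nonempty) (hb : Bornology.IsBounded K) {x : X}
    {g : StrongDual ℝ X} (hg : IsSubgrad (rFar K) x g) (v : X) : g v ≤ ‖v‖ := by
  have h1 := hg (x + v)
  have h2 := rFar_lip hne hb x (x + v)
  rw [add_sub_cancel_left] at h1 h2
  linarith

/-- Key step of Lau's theorem. -/
lemma lau_step {K : Set X} (hne : K.Nonempty) (hb : Bornology.IsBounded K) (y₀ : X)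
    {δ η : ℝ} (hδ : 0 < δ) (hη : 0 < η) :
    ∃ x₀, dist x₀ y₀ < δ ∧ ∃ ρ > 0, ∃ z₀ ∈ K, ∀ y ∈ ball x₀ ρ, ∀ g, IsSubgrad (rFar K) y g →
      rFar K y - η < g (y - z₀) := by
  have hr := rFar_nonneg hne hb y₀
  obtain ⟨l, hl0, hl1, hlδ⟩ : ∃ l : ℝ, 0 < l ∧ l ≤ 1 ∧ l * rFar K y₀ < δ := by
    refine ⟨min 1 (δ / (rFar K y₀ + 1)), by positivity, min_le_left _ _, ?_⟩
    have h1 : min 1 (δ / (rFar K y₀ + 1)) ≤ δ / (rFar K y₀ + 1) := min_le_right _ _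
    have h2 : δ / (rFar K y₀ + 1) * (rFar K y₀ + 1) = δ := by field_simp
    have h3 : 0 < δ / (rFar K y₀ + 1) := by positivity
    nlinarith
  have hρ : 0 < l * η / 4 := by positivity
  obtain ⟨z₀, hz₀, hz⟩ := exists_lt_rFar hne y₀ hρ
  have hn : ‖y₀ - z₀‖ ≤ rFar K y₀ := by
    rw [norm_sub_rev]; exact le_rFar hb y₀ hz₀
  refine ⟨y₀ + l • (y₀ - z₀), ?_, l * η / 4, hρ, z₀, hz₀, ?_⟩
  · rw [dist_eq_norm, add_sub_cancel_left, norm_smul, Real.norm_of_nonneg hl0.le]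
    nlinarith
  intro y hy g hg
  obtain ⟨e, rfl⟩ : ∃ e, y = y₀ + l • (y₀ - z₀) + e := ⟨y - (y₀ + l • (y₀ - z₀)), by abel⟩
  have he : ‖e‖ < l * η / 4 := by simpa [dist_eq_norm] using hy
  have hge := subgrad_le hne hb hg e
  have h1 := hg y₀
  have e1 : y₀ - (y₀ + l • (y₀ - z₀) + e) = -(l • (y₀ - z₀)) - e := by abel
  have e2 : y₀ + l • (y₀ - z₀) + e - z₀ = (1 + l) • (y₀ - z₀) + e := by module
  rw [e1, map_sub, map_neg, map_smul, smul_eq_mul] at h1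
  rw [e2, map_add, map_smul, smul_eq_mul]
  set R := rFar K (y₀ + l • (y₀ - z₀) + e)
  set w := g (y₀ - z₀)
  have h2 : (1 + l) * ‖z₀ - y₀‖ - ‖e‖ ≤ R := by
    have h3 := le_rFar hb (y₀ + l • (y₀ - z₀) + e) hz₀
    rw [norm_sub_rev, e2] at h3
    have h4 := norm_sub_le ((1 + l) • (y₀ - z₀) + e) e
    rw [add_sub_cancel_right, norm_smul, Real.norm_of_nonneg (by linarith),
      norm_sub_rev y₀ z₀] at h4
    linarith
  by_contra! hcon
  have a1 : l * ((1 + l) * w + g e) ≤ l * (R - η) := mul_le_mul_of_nonneg_left hcon hl0.le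
  have a2 : (1 + l) * (R + (-(l * w) - g e)) ≤ (1 + l) * rFar K y₀ :=
    mul_le_mul_of_nonneg_left h1 (by linarith)
  have a3 : (1 + l) * (rFar K y₀ - l * η / 4) < (1 + l) * ‖z₀ - y₀‖ :=
    mul_lt_mul_of_pos_left hz (by linarith)
  have a4 : (1 + l) * (l * η / 4) ≤ 2 * (l * η / 4) :=
    mul_le_mul_of_nonneg_right (by linarith) hρ.le
  nlinarith

lemma weak_limit (hrefl : Function.Surjective (NormedSpace.inclusionInDoubleDual ℝ X))
    {K : Set X} (hc : IsClosed K) (hb : Bornology.IsBounded K) (hcv : Convex ℝ K)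
    (z : ℕ → X) (hz : ∀ n, z n ∈ K) :
    ∃ w ∈ K, ∀ g : StrongDual ℝ X,
      Filter.Tendsto (fun n => g (z n)) (Filter.hyperfilter ℕ : Filter ℕ) (nhds (g w)) := by
  obtain ⟨C, hC⟩ := hb.exists_norm_le
  let ι : ℕ → WeakDual ℝ (StrongDual ℝ X) := fun n =>
    StrongDual.toWeakDual (NormedSpace.inclusionInDoubleDual ℝ X (z n))
  have hcomp := WeakDual.isCompact_closedBall (𝕜 := ℝ) (E := StrongDual ℝ X) 0 C
  obtain ⟨Φ, -, hΦ⟩ := hcomp.ultrafilter_le_nhds ((Filter.hyperfilter ℕ).map ι) (by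
    rw [Filter.le_principal_iff]
    refine Filter.mem_map.2 (Filter.univ_mem' fun n => ?_)
    show _ ∈ closedBall _ _
    rw [mem_closedBall_zero_iff]
    exact (NormedSpace.double_dual_bound ℝ X (z n)).trans (hC _ (hz n)))
  obtain ⟨w, hw⟩ := hrefl (WeakDual.toStrongDual Φ)
  have hlim : ∀ g : StrongDual ℝ X,
      Filter.Tendsto (fun n => g (z n)) (Filter.hyperfilter ℕ : Filter ℕ) (nhds (g w)) := by
    intro g
    have h1 : Filter.Tendsto ι (Filter.hyperfilter ℕ : Filter ℕ) (nhds Φ) := hΦ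
    have h2 := ((WeakDual.eval_continuous g).tendsto Φ).comp h1
    have h3 : Φ g = g w := by
      have := congrArg (fun T => T g) hw
      exact this.symm
    rw [← h3]
    exact h2
  refine ⟨w, ?_, hlim⟩
  by_contra hwK
  obtain ⟨g, u, h1, h2⟩ := geometric_hahn_banach_point_closed hcv hc hwK
  have := ge_of_tendsto (hlim g) (Filter.Eventually.of_forall fun n => (h2 _ (hz n)).le)
  linarith

/-- Lau's theorem in reflexive spaces: `D(K)` is dense. -/
lemma lau_dense [CompleteSpace X]
    (hrefl : Function.Surjective (NormedSpace.inclusionInDoubleDual ℝ X))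
    {K : Set X} (hne : K.Nonempty) (hc : IsClosed K) (hb : Bornology.IsBounded K)
    (hcv : Convex ℝ K) : Dense (DFar K) := by
  let U : ℕ → Set X := fun n => ⋃ p ∈ {p : X × ℝ | ∃ z₀ ∈ K, ∀ y ∈ ball p.1 p.2, ∀ g,
    IsSubgrad (rFar K) y g → rFar K y - 1 / ((n : ℝ) + 1) < g (y - z₀)}, ball p.1 p.2
  have hUo : ∀ n, IsOpen (U n) := fun n => isOpen_biUnion fun p _ => isOpen_ball
  have hUd : ∀ n, Dense (U n) := by
    intro n
    rw [Metric.dense_iff]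
    intro y₀ δ hδ
    obtain ⟨x₀, h1, ρ, hρ, z₀, hz₀, h⟩ :=
      lau_step hne hb y₀ hδ (η := 1 / ((n : ℝ) + 1)) (by positivity)
    exact ⟨x₀, h1, mem_biUnion (x := (x₀, ρ)) ⟨z₀, hz₀, h⟩ (mem_ball_self hρ)⟩
  refine (dense_iInter_of_isOpen_nat hUo hUd).mono fun x hx => ?_
  obtain ⟨g, hg⟩ := exists_subgrad (rFar_convex hne hb) (rFar_cont hne hb) x
  have hex : ∀ n : ℕ, ∃ z₀ ∈ K, rFar K x - 1 / ((n : ℝ) + 1) < g (x - z₀) := by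
    intro n
    obtain ⟨p, ⟨z₀, hz₀, h⟩, hxp⟩ := mem_iUnion₂.1 (mem_iInter.1 hx n)
    exact ⟨z₀, hz₀, h x hxp g hg⟩
  choose z hz hzg using hex
  obtain ⟨w, hw, hlim⟩ := weak_limit hrefl hc hb hcv z hz
  have h1 : Filter.Tendsto (fun n : ℕ => rFar K x - 1 / ((n : ℝ) + 1))
      (Filter.hyperfilter ℕ : Filter ℕ) (nhds (rFar K x - 0)) :=
    (tendsto_const_nhds.sub tendsto_one_div_add_atTop_nhds_zero_nat).mono_left
      (Nat.hyperfilter_le_atTop)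
  have h2 := (tendsto_const_nhds (x := g x)).sub (hlim g)
  have h3 := le_of_tendsto_of_tendsto' h1 h2 (fun n => by
    rw [← map_sub]; exact (hzg n).le)
  rw [← map_sub, sub_zero] at h3
  have h4 := subgrad_le hne hb hg (x - w)
  rw [norm_sub_rev] at h4
  exact ⟨w, hw, le_antisymm (le_rFar hb x hw) (h3.trans h4)⟩

lemma mip_to_far [CompleteSpace X]
    (hrefl : Function.Surjective (NormedSpace.inclusionInDoubleDual ℝ X))
    (H : ∀ K : Set X, IsClosed K → Bornology.IsBounded K → Convex ℝ K → Admissible K)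
    {K : Set X} (hne : K.Nonempty) (hc : IsClosed K) (hb : Bornology.IsBounded K)
    (hcv : Convex ℝ K) : K = closure (convexHull ℝ (farPoints K)) := by
  have hsub : closure (convexHull ℝ (farPoints K)) ⊆ K := by
    refine closure_minimal (convexHull_min (fun z hz => ?_) hcv) hc
    obtain ⟨x, h, -⟩ := mem_farPoints.1 hz
    exact h
  refine Subset.antisymm (fun z₀ hz₀ => ?_) hsub
  have hadm := H _ isClosed_closure (hb.subset hsub) (convex_convexHull ℝ (farPoints K)).closure
  rw [hadm]
  refine mem_iInter₂.2 fun p hp => ?_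
  obtain ⟨x, ρ⟩ := p
  simp only [mem_ofPred_eq] at hp ⊢
  by_contra hcon
  rw [mem_closedBall, not_le] at hcon
  obtain ⟨y, hy, hyd⟩ := (lau_dense hrefl hne hc hb hcv).exists_dist_lt x
    (ε := (dist z₀ x - ρ) / 2) (by linarith)
  obtain ⟨q, hq⟩ := hy
  have hqf : q ∈ closure (convexHull ℝ (farPoints K)) :=
    subset_closure (subset_convexHull ℝ _ (mem_farPoints.2 ⟨y, hq⟩))
  have h1 := mem_closedBall.1 (hp hqf)
  have h2 := le_rFar hb y hz₀
  rw [← hq.2, ← dist_eq_norm, ← dist_eq_norm] at h2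
  have h3 := dist_triangle z₀ y x
  have h4 := dist_triangle q x y
  rw [dist_comm y x] at h3
  linarith

lemma far_to_mip
    (H : ∀ K : Set X, K.Nonempty → IsClosed K → Bornology.IsBounded K → Convex ℝ K →
      K = closure (convexHull ℝ (farPoints K)))
    {K : Set X} (hc : IsClosed K) (hb : Bornology.IsBounded K)
    (hcv : Convex ℝ K) : Admissible K := by
  refine Subset.antisymm (subset_iInter₂ fun p hp => hp) fun x₀ hx₀ => ?_
  rw [mem_iInter₂] at hx₀
  rcases K.eq_empty_or_nonempty with rfl | hne
  · have := hx₀ (x₀, -1) (by simp)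
    simp at this
  by_contra hx₀K
  -- a closed thickening of `K` missing `x₀`
  obtain ⟨ε, hε, hεK⟩ : ∃ ε > 0, x₀ ∉ cthickening ε K := by
    have hpos : 0 < infDist x₀ K := (hc.notMem_iff_infDist_pos hne).1 hx₀K
    refine ⟨infDist x₀ K / 2, by linarith, fun h => ?_⟩
    have : infDist x₀ K ≤ infDist x₀ K / 2 :=
      ENNReal.toReal_le_of_le_ofReal (by linarith) (mem_cthickening_iff.1 h)
    linarith
  set K₁ := cthickening ε K with hK₁
  have hK₁b : Bornology.IsBounded K₁ := hb.cthickening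
  have hK₁c : IsClosed K₁ := isClosed_cthickening
  have hK₁cv : Convex ℝ K₁ := hcv.cthickening ε
  have hKK₁ : K ⊆ K₁ := self_subset_cthickening K
  have hK₁ne : K₁.Nonempty := hne.mono hKK₁
  set L := closure (convexHull ℝ (insert x₀ K₁)) with hL
  have hLb : Bornology.IsBounded L := (isBounded_convexHull.2 (hK₁b.insert x₀)).closure
  have hsubL : insert x₀ K₁ ⊆ L := (subset_convexHull ℝ _).trans subset_closure
  have hx₀L : x₀ ∈ L := hsubL (mem_insert _ _)
  have hLeq := H L ⟨x₀, hx₀L⟩ isClosed_closure hLb (convex_convexHull ℝ _).closure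
  -- some point `x` has `x₀` as a farthest point in `L`
  have hex : ∃ x, ‖x₀ - x‖ = rFar L x := by
    by_contra! hno
    have hfar : farPoints L ⊆ K₁ := by
      intro z hz
      obtain ⟨x, hzL, hzr⟩ := mem_farPoints.1 hz
      have hlt : ‖x₀ - x‖ < rFar L x := lt_of_le_of_ne (le_rFar hLb x hx₀L) (hno x)
      obtain ⟨c, hc0, hcc⟩ : ∃ c, 0 < c ∧ rFar L x - ‖x₀ - x‖ = c := ⟨_, by linarith, rfl⟩
      obtain ⟨M, hM⟩ := hK₁b.exists_norm_le
      have hM0 : 0 ≤ M := by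
        obtain ⟨k, hk⟩ := hK₁ne
        exact (norm_nonneg k).trans (hM k hk)
      rw [← hK₁c.closure_eq, Metric.mem_closure_iff]
      intro θ hθ
      set N := 1 + (‖x₀‖ + M) / c with hN
      have hNpos : 0 < N := by positivity
      obtain ⟨y, hy, hyz⟩ := Metric.mem_closure_iff.1 hzL (θ / N) (by positivity)
      rw [convexHull_insert hK₁ne, hK₁cv.convexHull_eq, mem_convexJoin] at hy
      obtain ⟨x', hx', k, hk, hy⟩ := hy
      rw [mem_singleton_iff] at hx'
      subst hx'
      obtain ⟨a, b, ha, hb', hab, rfl⟩ := hy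
      refine ⟨k, hk, ?_⟩
      rw [dist_eq_norm] at hyz ⊢
      set y := a • x' + b • k with hydef
      have e1 : y - x = a • (x' - x) + b • (k - x) := by
        have : x = a • x + b • x := by rw [← add_smul, hab, one_smul]
        rw [hydef]
        nth_rewrite 1 [this]
        module
      have e2 : y - k = a • (x' - k) := by
        have : k = a • k + b • k := by rw [← add_smul, hab, one_smul]
        nth_rewrite 1 [this]
        rw [hydef]
        module
      have n1 : ‖y - x‖ ≤ a * ‖x' - x‖ + b * ‖k - x‖ := by
        rw [e1]
        refine (norm_add_le _ _).trans ?_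
        rw [norm_smul, norm_smul, Real.norm_of_nonneg ha, Real.norm_of_nonneg hb']
      have n2 : ‖k - x‖ ≤ rFar L x := le_rFar hLb x (hsubL (mem_insert_of_mem _ hk))
      have n3 : ‖y - k‖ ≤ a * (‖x'‖ + M) := by
        rw [e2, norm_smul, Real.norm_of_nonneg ha]
        have := norm_sub_le x' k
        have := hM k hk
        gcongr
        linarith
      have n4 : ‖z - x‖ ≤ ‖z - y‖ + ‖y - x‖ := norm_sub_le_norm_sub_add_norm_sub _ _ _
      have n5 : ‖z - k‖ ≤ ‖z - y‖ + ‖y - k‖ := norm_sub_le_norm_sub_add_norm_sub _ _ _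
      have n6 : b * ‖k - x‖ ≤ b * rFar L x := mul_le_mul_of_nonneg_left n2 hb'
      have n7 : a * c ≤ ‖z - y‖ := by
        have : b = 1 - a := by linarith
        subst this
        have : ‖x' - x‖ = rFar L x - c := by linarith
        rw [this] at n1
        nlinarith
      have n8 : a ≤ ‖z - y‖ / c := (le_div_iff₀ hc0).2 n7
      have n9 : a * (‖x'‖ + M) ≤ ‖z - y‖ / c * (‖x'‖ + M) :=
        mul_le_mul_of_nonneg_right n8 (by positivity)
      have n10 : ‖z - y‖ + ‖z - y‖ / c * (‖x'‖ + M) = ‖z - y‖ * N := by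
        rw [hN]; ring
      have n11 : ‖z - y‖ * N < θ := (lt_div_iff₀ hNpos).1 hyz
      linarith
    apply hεK
    have : L ⊆ K₁ := by
      rw [hLeq]
      exact closure_minimal (convexHull_min hfar hK₁cv) hK₁c
    exact this hx₀L
  obtain ⟨x, hx⟩ := hex
  have hrpos : 0 < rFar L x := by
    refine lt_of_le_of_ne (rFar_nonneg ⟨x₀, hx₀L⟩ hLb x) fun h0 => ?_
    obtain ⟨k, hk⟩ := hne
    have h1 := le_rFar hLb x (hsubL (mem_insert_of_mem _ (hKK₁ hk)))
    rw [← h0, norm_le_zero_iff, sub_eq_zero] at h1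
    rw [← h0, norm_eq_zero, sub_eq_zero] at hx
    exact hx₀K (by rw [hx, ← h1]; exact hk)
  have hball : K ⊆ closedBall x (max (rFar L x - ε) 0) := by
    intro k hk
    rw [mem_closedBall, dist_eq_norm]
    rcases (norm_nonneg (k - x)).eq_or_lt with h0 | hpos
    · rw [← h0]; exact le_max_right _ _
    · refine le_trans ?_ (le_max_left _ _)
      set v := k + (ε / ‖k - x‖) • (k - x) with hv
      have hvK : v ∈ K₁ := by
        refine mem_cthickening_of_dist_le v k ε K hk ?_
        rw [dist_eq_norm, hv, add_sub_cancel_left, norm_smul, Real.norm_of_nonneg (by positivity)]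
        field_simp
        exact le_rfl
      have h1 := le_rFar hLb x (hsubL (mem_insert_of_mem _ hvK))
      have h2 : v - x = (1 + ε / ‖k - x‖) • (k - x) := by rw [hv]; module
      rw [h2, norm_smul, Real.norm_of_nonneg (by positivity)] at h1
      have h3 : (1 + ε / ‖k - x‖) * ‖k - x‖ = ‖k - x‖ + ε := by field_simp
      linarith
  have hfin := hx₀ (x, max (rFar L x - ε) 0) hball
  rw [mem_closedBall, dist_eq_norm, hx] at hfin
  rcases le_max_iff.1 hfin with h | h <;> linarith

end FarAux

/-- Corollary far1 (Lau): a reflexive Banach space has the MIP iff every nonempty closed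
bounded convex set is the closed convex hull of its farthest points. -/
theorem stmt_9 {X : Type*} [NormedAddCommGroup X] [NormedSpace ℝ X] [CompleteSpace X]
    (hrefl : Function.Surjective (NormedSpace.inclusionInDoubleDual ℝ X)) :
    (∀ K : Set X, IsClosed K → Bornology.IsBounded K → Convex ℝ K → Admissible K) ↔
    (∀ K : Set X, K.Nonempty → IsClosed K → Bornology.IsBounded K → Convex ℝ K →
      K = closure (convexHull ℝ (farPoints K))) := by
  exact ⟨fun H K hne hc hb hcv => mip_to_far hrefl H hne hc hb hcv,
    fun H K hc hb hcv => far_to_mip H hc hb hcv⟩
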